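/- Let 0 < r ≤ p and let S be a random variable, b > 0, ε > 0. Then E[( |S| − ε b )_+^r] ≤ b^r · P{ |S| > ε b } + b^{r − p} ∫_{b^p}^∞ P{ |S| > s^{1/p} } ds. -/

import Mathlib

open MeasureTheory

/-!
For `x ≥ 0`, `b > 0` and `0 ≤ r ≤ p` one has `x ^ r ≤ b ^ r + b ^ (r - p) * (x ^ p - b ^ p)₊`: if
`x ≤ b` the first term suffices, and if `b ≤ x` then
`x ^ r = x ^ (r - p) * x ^ p ≤ b ^ (r - p) * x ^ p`. Apply this to `x = X ω` and integrate over
`{X > 0}`: the layer cake formula turns the expectation of `(X₊ ^ p - b ^ p)₊` into the integral of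
`P{X > s ^ (1 / p)}` over `s > b ^ p`. Take `X = |S| - ε * b`, whose tail is dominated by that of
`|S|`.
-/

theorem ofReal_rpow_le_ofReal_rpow_add {x b r p : ℝ} (hx : 0 ≤ x) (hb : 0 < b) (hr : 0 ≤ r)
    (hrp : r ≤ p) :
    ENNReal.ofReal (x ^ r)
      ≤ ENNReal.ofReal (b ^ r) + ENNReal.ofReal (b ^ (r - p)) * ENNReal.ofReal (x ^ p - b ^ p) := by
  rcases le_total x b with hxb | hbx
  · exact le_add_right (ENNReal.ofReal_le_ofReal (Real.rpow_le_rpow hx hxb hr))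
  · have hpow : b ^ p ≤ x ^ p := Real.rpow_le_rpow hb.le hbx (hr.trans hrp)
    have hbound : x ^ r ≤ b ^ r + b ^ (r - p) * (x ^ p - b ^ p) := calc
      x ^ r = x ^ (r - p) * x ^ p := by rw [← Real.rpow_add (hb.trans_le hbx), sub_add_cancel]
      _ ≤ b ^ (r - p) * x ^ p := by
        gcongr ?_ * _
        exact Real.rpow_le_rpow_of_nonpos hb hbx (sub_nonpos.2 hrp)
      _ = b ^ (r - p) * b ^ p + b ^ (r - p) * (x ^ p - b ^ p) := by ring
      _ = b ^ r + b ^ (r - p) * (x ^ p - b ^ p) := by rw [← Real.rpow_add hb, sub_add_cancel]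
    rw [← ENNReal.ofReal_mul (by positivity),
      ← ENNReal.ofReal_add (by positivity) (mul_nonneg (by positivity) (sub_nonneg.2 hpow))]
    exact ENNReal.ofReal_le_ofReal hbound

theorem rpow_one_div_lt_iff_lt_max_zero_rpow {s x p : ℝ} (hs : 0 ≤ s) (hp : 0 < p) :
    s ^ (1 / p) < x ↔ s < max x 0 ^ p := by
  rw [← Real.rpow_inv_lt_iff_of_pos hs (le_max_right x 0) hp, ← one_div, lt_max_iff,
    or_iff_left (Real.rpow_nonneg hs _).not_gt]

section

variable {Ω : Type*} [MeasurableSpace Ω] (μ : Measure Ω) {X : Ω → ℝ}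

theorem lintegral_ofReal_sub_eq_setLIntegral_Ioi_meas_lt (hX : AEMeasurable X μ) (a : ℝ) :
    ∫⁻ ω, ENNReal.ofReal (X ω - a) ∂μ = ∫⁻ s in Set.Ioi a, μ {ω | s < X ω} := calc
  ∫⁻ ω, ENNReal.ofReal (X ω - a) ∂μ = ∫⁻ ω, ENNReal.ofReal (max (X ω - a) 0) ∂μ := by
    simp only [ENNReal.ofReal_max, ENNReal.ofReal_zero, max_eq_left zero_le]
  _ = ∫⁻ t in Set.Ioi 0, μ {ω | t < max (X ω - a) 0} :=
    lintegral_eq_lintegral_meas_lt μ (ae_of_all _ fun _ => le_max_right _ _)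
      ((hX.sub_const a).max aemeasurable_const)
  _ = ∫⁻ t in Set.Ioi 0, μ {ω | t + a < X ω} := by
    refine setLIntegral_congr_fun measurableSet_Ioi fun t (ht : 0 < t) => ?_
    simp only [lt_max_iff, ht.not_gt, or_false, lt_sub_iff_add_lt]
  _ = ∫⁻ s in Set.Ioi a, μ {ω | s < X ω} := by
    simpa only [Set.preimage_add_const_Ioi, sub_self] using
      (measurePreserving_add_right volume a).setLIntegral_comp_preimage_emb
        (measurableEmbedding_addRight a) (fun s => μ {ω | s < X ω}) (Set.Ioi a)

theorem lintegral_ofReal_max_zero_rpow_sub_eq_setLIntegral_Ioi_meas_lt (hX : AEMeasurable X μ)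
    {a p : ℝ} (ha : 0 ≤ a) (hp : 0 < p) :
    ∫⁻ ω, ENNReal.ofReal (max (X ω) 0 ^ p - a) ∂μ
      = ∫⁻ s in Set.Ioi a, μ {ω | s ^ (1 / p) < X ω} := by
  rw [lintegral_ofReal_sub_eq_setLIntegral_Ioi_meas_lt μ
    ((hX.max aemeasurable_const).pow_const p) a]
  refine setLIntegral_congr_fun measurableSet_Ioi fun s (hs : a < s) => ?_
  simp only [rpow_one_div_lt_iff_lt_max_zero_rpow (ha.trans hs.le) hp]

theorem lintegral_ofReal_max_zero_rpow_le (hX : AEMeasurable X μ) {p r b : ℝ} (hr : 0 < r)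
    (hrp : r ≤ p) (hb : 0 < b) :
    ∫⁻ ω, ENNReal.ofReal (max (X ω) 0 ^ r) ∂μ
      ≤ ENNReal.ofReal (b ^ r) * μ {ω | 0 < X ω}
          + ENNReal.ofReal (b ^ (r - p)) *
              ∫⁻ s in Set.Ioi (b ^ p), μ {ω | s ^ (1 / p) < X ω} := by
  set excess : Ω → ENNReal := fun ω => ENNReal.ofReal (max (X ω) 0 ^ p - b ^ p)
  have hexcess : AEMeasurable excess μ :=
    (((hX.max aemeasurable_const).pow_const p).sub_const _).ennreal_ofReal
  have hpointwise (ω : Ω) : ENNReal.ofReal (max (X ω) 0 ^ r)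
      ≤ {ω | 0 < X ω}.indicator (fun _ => ENNReal.ofReal (b ^ r)) ω
          + ENNReal.ofReal (b ^ (r - p)) * excess ω := by
    by_cases hpos : 0 < X ω
    · rw [Set.indicator_of_mem (s := {ω | 0 < X ω}) hpos]
      exact ofReal_rpow_le_ofReal_rpow_add (le_max_right _ _) hb hr.le hrp
    · simp [max_eq_right (not_lt.1 hpos), Real.zero_rpow hr.ne']
  rw [← lintegral_ofReal_max_zero_rpow_sub_eq_setLIntegral_Ioi_meas_lt μ hX
    (Real.rpow_nonneg hb.le p) (hr.trans_le hrp)]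
  calc ∫⁻ ω, ENNReal.ofReal (max (X ω) 0 ^ r) ∂μ
    _ ≤ ∫⁻ ω, {ω | 0 < X ω}.indicator (fun _ => ENNReal.ofReal (b ^ r)) ω
          + ENNReal.ofReal (b ^ (r - p)) * excess ω ∂μ := lintegral_mono hpointwise
    _ = ∫⁻ ω, {ω | 0 < X ω}.indicator (fun _ => ENNReal.ofReal (b ^ r)) ω ∂μ
          + ENNReal.ofReal (b ^ (r - p)) * ∫⁻ ω, excess ω ∂μ := by
      rw [lintegral_add_right' _ (hexcess.const_mul _), lintegral_const_mul'' _ hexcess]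
    _ ≤ ENNReal.ofReal (b ^ r) * μ {ω | 0 < X ω}
          + ENNReal.ofReal (b ^ (r - p)) * ∫⁻ ω, excess ω ∂μ := by
      gcongr
      exact lintegral_indicator_const_le _ _

theorem stmt_15_general (hX : AEMeasurable X μ) {p r b c : ℝ} (hr : 0 < r) (hrp : r ≤ p)
    (hb : 0 < b) (hc : 0 ≤ c) :
    ∫⁻ ω, ENNReal.ofReal ((max (X ω - c) 0) ^ r) ∂μ
      ≤ ENNReal.ofReal (b ^ r) * μ {ω | c < X ω}
          + ENNReal.ofReal (b ^ (r - p)) *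
              ∫⁻ s in Set.Ioi (b ^ p), μ {ω | s ^ (1 / p) < X ω} := calc
  ∫⁻ ω, ENNReal.ofReal ((max (X ω - c) 0) ^ r) ∂μ
    ≤ ENNReal.ofReal (b ^ r) * μ {ω | 0 < X ω - c}
        + ENNReal.ofReal (b ^ (r - p)) *
            ∫⁻ s in Set.Ioi (b ^ p), μ {ω | s ^ (1 / p) < X ω - c} :=
    lintegral_ofReal_max_zero_rpow_le μ (hX.sub_const c) hr hrp hb
  _ ≤ ENNReal.ofReal (b ^ r) * μ {ω | c < X ω}
        + ENNReal.ofReal (b ^ (r - p)) *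
            ∫⁻ s in Set.Ioi (b ^ p), μ {ω | s ^ (1 / p) < X ω} := by
    simp only [sub_pos]
    gcongr
    exact sub_le_self _ hc

end

/-- **Key estimate in the Remark after Theorem 2.5.** For `0 < r ≤ p`, `b > 0`, `ε > 0`:
`E[(|S| − εb)₊^r] ≤ b^r P{|S| > εb} + b^{r−p} ∫_{b^p}^∞ P{|S| > s^{1/p}} ds`. -/
theorem stmt_15 {Ω : Type*} [MeasurableSpace Ω] (μ : Measure Ω) [IsProbabilityMeasure μ]
    (S : Ω → ℝ) (hS : Measurable S) (p r b ε : ℝ)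
    (hr0 : 0 < r) (hrp : r ≤ p) (hb : 0 < b) (hε : 0 < ε) :
    ∫⁻ ω, ENNReal.ofReal ((max (|S ω| - ε * b) 0) ^ r) ∂μ
      ≤ ENNReal.ofReal (b ^ r) * μ {ω | ε * b < |S ω|}
          + ENNReal.ofReal (b ^ (r - p)) *
              ∫⁻ s in Set.Ioi (b ^ p), μ {ω | s ^ (1 / p) < |S ω|} :=
  stmt_15_general μ hS.abs.aemeasurable hr0 hrp hb (mul_pos hε hb).le
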